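/- Let δ21 = X² + 2X + 2, δ22 = X² + 2, and δ81 = X⁸ + 4X⁷ + 6X⁶ + 4X⁵ + 2X⁴ + 8X³ + 24X² + 32X + 16. Then for every n ≥ 4 and every finite field K with 2^n elements, the number of a ∈ K with T_1(a) = 0, T_2(a) = 0 and T_4(a) = 0 (with T_3(a) unrestricted) equals 2^{n−3} − (1/8)·(ρ_n(δ21) + 2ρ_n(δ22) + ρ_n(δ81)), as complex numbers. -/

import Mathlib

/-!
For `a ∈ K` let `f ∈ 𝔽₂[X]` be the characteristic polynomial of multiplication by `a`. Over `K` its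
reverse is `∏ i, (1 - a ^ 2 ^ i * X)`, so `T_k(a)` is, up to sign, the coefficient of `X ^ k` in the
reverse of `f`. Reversal is multiplicative, and the conditions on `T_1`, `T_2`, `T_4` say that the
class of the reverse in `(𝔽₂[X] / X ^ 5)ˣ ≅ ℤ/8 × ℤ/2` has trivial `ℤ/8`-component, which the eight
characters `χ` of `ℤ/8` detect.

For `χ ≠ 1` the series `L(χ, T) = ∑ χ(f) T ^ deg f` is a polynomial of degree at most `3`, because
the reverses of the monic polynomials of degree `m ≥ 4` are equidistributed modulo `X ^ 5`. Since
`T L' / L = ∑ Λ(f) χ(f) T ^ deg f`, and `Λ(f)` is the number of `a ∈ K` with characteristic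
polynomial `f` when `deg f = n`, the sum of `χ` over `K` is minus the sum of the `n`-th powers of
the reciprocal roots of `L(χ, T)`. The monic cubics with these roots, for the seven `χ ≠ 1`, have
product `X ^ 7 * δ21 * δ22 ^ 2 * δ81`.
-/

open Polynomial

/-- For a finite field `K` with `2^n` elements, the `k`-th trace function
`T_k(a) = Σ_S ∏_{i ∈ S} a^(2^i)`, the sum over all `k`-element subsets `S` of `{0,…,n-1}`. -/
noncomputable def traceFn (q n k : ℕ) {K : Type*} [CommRing K] (a : K) : K :=
  ∑ S ∈ Finset.powersetCard k (Finset.range n), ∏ i ∈ S, a ^ (q ^ i)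

/-- `ρ_n(γ)`: the sum of the `n`-th powers of the complex roots of `γ ∈ ℤ[X]`,
counted with multiplicity. -/
noncomputable def rho (n : ℕ) (γ : Polynomial ℤ) : ℂ :=
  ((γ.map (Int.castRingHom ℂ)).roots.map (· ^ n)).sum

noncomputable def d21 : Polynomial ℤ := X ^ 2 + 2 * X + 2
noncomputable def d22 : Polynomial ℤ := X ^ 2 + 2
noncomputable def d81 : Polynomial ℤ :=
  X ^ 8 + 4 * X ^ 7 + 6 * X ^ 6 + 4 * X ^ 5 + 2 * X ^ 4 + 8 * X ^ 3 + 24 * X ^ 2 + 32 * X + 16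

section LogDeriv

variable {R : Type*} [CommRing R]

lemma mk_pow_mul_one_sub (a : R) :
    PowerSeries.mk (a ^ ·) * (1 - PowerSeries.C a * PowerSeries.X) = 1 := by
  have h := congrArg (PowerSeries.rescale a) (PowerSeries.mk_one_mul_one_sub_eq_one R)
  simpa [PowerSeries.rescale_mk, PowerSeries.rescale_X] using h

/-- `T (d/dT) log (1 - aT) = -aT / (1 - aT) = 1 - ∑ n, a ^ n T ^ n`, summed over `s`. -/
lemma X_mul_derivative_prod_one_sub (s : Multiset R) :
    PowerSeries.X * PowerSeries.derivative R
        (s.map fun a => 1 - PowerSeries.C a * PowerSeries.X).prod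
      = (s.map fun a => 1 - PowerSeries.mk (a ^ ·)).sum
        * (s.map fun a => 1 - PowerSeries.C a * PowerSeries.X).prod := by
  induction s using Multiset.induction_on with
  | empty => simp
  | cons a s ih =>
    simp only [Multiset.map_cons, Multiset.prod_cons, Multiset.sum_cons]
    set Q := (s.map fun a => 1 - PowerSeries.C a * PowerSeries.X).prod
    have hd : PowerSeries.derivative R (1 - PowerSeries.C a * PowerSeries.X)
        = -PowerSeries.C a := by simp
    rw [Derivation.leibniz, hd, smul_eq_mul, smul_eq_mul]
    linear_combination (1 - PowerSeries.C a * PowerSeries.X) * ih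
      + Q * mk_pow_mul_one_sub a

end LogDeriv

section PowerSum

variable {R : Type*} [CommRing R] [IsDomain R]

/-- The sum of the `n`-th powers of the roots of `p` in `R`, counted with multiplicity;
`rho n γ` is the power sum of the image of `γ` in `ℂ[X]`. -/
noncomputable def powerSum (n : ℕ) (p : R[X]) : R :=
  (p.roots.map (· ^ n)).sum

lemma powerSum_X {n : ℕ} (hn : n ≠ 0) : powerSum n (X : R[X]) = 0 := by
  simp [powerSum, hn]

lemma powerSum_mul {p q : R[X]} (hp : p ≠ 0) (hq : q ≠ 0) (n : ℕ) :
    powerSum n (p * q) = powerSum n p + powerSum n q := by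
  simp [powerSum, roots_mul (mul_ne_zero hp hq)]

lemma powerSum_pow (p : R[X]) (k n : ℕ) : powerSum n (p ^ k) = k * powerSum n p := by
  simp [powerSum, Multiset.map_nsmul, Multiset.sum_nsmul]

lemma powerSum_prod {ι : Type*} (s : Finset ι) {p : ι → R[X]} (hp : ∀ i ∈ s, p i ≠ 0) (n : ℕ) :
    powerSum n (∏ i ∈ s, p i) = ∑ i ∈ s, powerSum n (p i) := by
  simp [powerSum, roots_prod p s (Finset.prod_ne_zero_iff.2 hp), Multiset.map_bind,
    Multiset.sum_bind]

lemma reverse_X_sub_C (a : R) : (X - C a).reverse = 1 - C a * X := by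
  rw [reverse, natDegree_X_sub_C, reflect_sub, reflect_one_X, reflect_C, pow_one]

lemma reverse_multiset_prod_X_sub_C (s : Multiset R) :
    (s.map fun a => X - C a).prod.reverse = (s.map fun a => 1 - C a * X).prod := by
  induction s using Multiset.induction_on with
  | empty => simpa using reverse_C (1 : R)
  | cons a s ih => simp only [Multiset.map_cons, Multiset.prod_cons, reverse_mul_of_domain, ih,
      reverse_X_sub_C]

lemma reverse_prod_X_sub_C {ι : Type*} (s : Finset ι) (a : ι → R) :
    (∏ i ∈ s, (X - C (a i))).reverse = ∏ i ∈ s, (1 - C (a i) * X) := by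
  simpa only [Multiset.map_map, Function.comp_def, Finset.prod] using
    reverse_multiset_prod_X_sub_C (s.val.map a)

theorem coeff_logDeriv_reverse {p : R[X]} (hp : p.Monic) (hs : p.Splits) {S : PowerSeries R}
    (hS : PowerSeries.X * PowerSeries.derivative R (p.reverse : PowerSeries R)
      = S * (p.reverse : PowerSeries R)) {n : ℕ} (hn : n ≠ 0) :
    PowerSeries.coeff n S = -powerSum n p := by
  have hprod : (p.reverse : PowerSeries R)
      = (p.roots.map fun a => 1 - PowerSeries.C a * PowerSeries.X).prod := by
    conv_lhs => rw [hs.eq_prod_roots_of_monic hp, reverse_multiset_prod_X_sub_C]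
    rw [← coeToPowerSeries.ringHom_apply, map_multiset_prod, Multiset.map_map]
    exact congrArg _ (Multiset.map_congr rfl fun a _ => by simp)
  have hne : (p.reverse : PowerSeries R) ≠ 0 := by
    simpa using hp.ne_zero
  have hlog : S = (p.roots.map fun a => 1 - PowerSeries.mk (a ^ ·)).sum := by
    rw [hprod] at hne hS
    exact mul_right_cancel₀ hne (hS.symm.trans (X_mul_derivative_prod_one_sub _))
  rw [hlog, powerSum, map_multiset_sum, ← Multiset.sum_map_neg]
  simp [PowerSeries.coeff_one, hn]

end PowerSum

/-- The first `k` coefficients of `f` below the leading one, padded with zeros: the coefficients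
of `X, …, X ^ k` in the reversed polynomial. -/
noncomputable def topCoeffs {R : Type*} [Semiring R] (k : ℕ) (f : R[X]) : Fin k → R :=
  fun i => f.reverse.coeff (i + 1)

section MonicsOfDegree

variable {R : Type*} [CommRing R] [Nontrivial R]

/-- Monic polynomials `X ^ m + c 0 * X ^ (m - 1) + ⋯ + c (m - 1)`, listed by their coefficients from
the top down, so that `c i` is the coefficient of `X ^ (i + 1)` in the reversed polynomial. -/
noncomputable def monicEquivCoeffs (R : Type*) [CommRing R] [Nontrivial R] (m : ℕ) :
    {f : R[X] // f.Monic ∧ f.natDegree = m} ≃ (Fin m → R) :=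
  (monicEquivDegreeLT m).trans
    ((degreeLTEquiv R m).toEquiv.trans (Fin.revPerm.arrowCongr (Equiv.refl R)))

lemma topCoeffs_monicEquivCoeffs_symm {m : ℕ} (c : Fin m → R) (k : ℕ) :
    topCoeffs k ((monicEquivCoeffs R m).symm c).1
      = fun i : Fin k => if h : (i : ℕ) < m then c ⟨i, h⟩ else 0 := by
  obtain ⟨f, rfl⟩ := (monicEquivCoeffs R m).surjective c
  rw [Equiv.symm_apply_apply]
  ext i
  rw [topCoeffs, coeff_reverse, f.2.2]
  split_ifs with h
  · rw [revAt_le h]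
    have hne : m - (i + 1) ≠ f.1.natDegree := by rw [f.2.2]; lia
    simp [monicEquivCoeffs, monicEquivDegreeLT, degreeLTEquiv, eraseLead_coeff_of_ne _ hne,
      Fin.val_rev]
  · rw [revAt_eq_self_of_lt (by lia)]
    exact coeff_eq_zero_of_natDegree_lt (by rw [f.2.2]; lia)

variable [Fintype R]

/-- The finite set of monic polynomials of degree `m` over a finite ring. -/
noncomputable def monicsOfDegree (R : Type*) [CommRing R] [Nontrivial R] [Fintype R] (m : ℕ) :
    Finset R[X] :=
  Finset.univ.map ((monicEquivCoeffs R m).symm.toEmbedding.trans (Function.Embedding.subtype _))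

lemma mem_monicsOfDegree {m : ℕ} {f : R[X]} :
    f ∈ monicsOfDegree R m ↔ f.Monic ∧ f.natDegree = m := by
  simp [monicsOfDegree, ← (monicEquivCoeffs R m).exists_congr_right]

lemma sum_monicsOfDegree {M : Type*} [AddCommMonoid M] (m : ℕ) (g : R[X] → M) :
    ∑ f ∈ monicsOfDegree R m, g f = ∑ c, g ((monicEquivCoeffs R m).symm c).1 :=
  Finset.sum_map ..

lemma sum_monicsOfDegree_topCoeffs {M : Type*} [AddCommMonoid M] (k j : ℕ) (g : (Fin k → R) → M) :
    ∑ f ∈ monicsOfDegree R (k + j), g (topCoeffs k f) = Fintype.card R ^ j • ∑ u, g u := by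
  have htop (u : Fin k → R) (v : Fin j → R) :
      topCoeffs k ((monicEquivCoeffs R (k + j)).symm (Fin.append u v)).1 = u := by
    rw [topCoeffs_monicEquivCoeffs_symm]
    ext i
    rw [dif_pos (by lia)]
    exact Fin.append_left u v i
  rw [sum_monicsOfDegree, ← (Fin.appendEquiv k j).sum_comp, Fintype.sum_prod_type_right]
  simp [Fin.appendEquiv, htop]

end MonicsOfDegree

section VonMangoldt

open UniqueFactorizationMonoid

open Classical in
/-- The von Mangoldt function of `F[X]`: the degree of `P` at a power of an irreducible `P`,
and `0` elsewhere. -/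
noncomputable def polyVonMangoldt {F : Type*} [Field F] (f : F[X]) : ℕ :=
  if IsPrimePow f then (radical f).natDegree else 0

variable {F : Type*} [Field F]

lemma polyVonMangoldt_pow {P : F[X]} (hP : Irreducible P) {k : ℕ} (hk : k ≠ 0) :
    polyVonMangoldt (P ^ k) = P.natDegree := by
  classical
  rw [polyVonMangoldt, if_pos (hP.prime.isPrimePow.pow hk), radical_pow_of_prime hP.prime hk]
  exact natDegree_eq_of_degree_eq degree_normalize

lemma exists_monic_irreducible_pow_eq {f : F[X]} (hf : f.Monic) (h : IsPrimePow f) :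
    ∃ P : F[X], ∃ k ≠ 0, P.Monic ∧ Irreducible P ∧ P ^ k = f := by
  classical
  obtain ⟨p, k, hp, hk, rfl⟩ := h
  exact ⟨normalize p, k, hk.ne', monic_normalize hp.ne_zero,
    (normalize_associated p).irreducible_iff.2 hp.irreducible,
    eq_of_monic_of_associated ((monic_normalize hp.ne_zero).pow k) hf
      (normalize_associated p).pow_pow⟩

lemma natDegree_eq_sum_primeFactors [DecidableEq F] {f : F[X]} (hf : f.Monic) :
    f.natDegree = ∑ P ∈ primeFactors f, multiplicity P f * P.natDegree := by
  classical
  have hprod : f = (normalizedFactors f).prod := by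
    rw [prod_normalizedFactors_eq hf.ne_zero, hf.normalize_eq_self]
  conv_lhs => rw [hprod, natDegree_multiset_prod _ (zero_notMem_normalizedFactors f),
    Finset.sum_multiset_map_count]
  rw [toFinset_normalizedFactors]
  refine Finset.sum_congr rfl fun P hP => ?_
  have hP := (Polynomial.mem_normalizedFactors_iff hf.ne_zero).1 (mem_primeFactors.1 hP)
  rw [multiplicity_eq_count_normalizedFactors hP.1 hf.ne_zero, hP.2.1.normalize_eq_self,
    smul_eq_mul]

variable [Fintype F]

open Classical in
/-- The finite set of monic divisors of a nonzero polynomial over a finite field. -/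
noncomputable def monicDivisors (f : F[X]) : Finset F[X] :=
  ((Finset.range (f.natDegree + 1)).biUnion (monicsOfDegree F)).filter (· ∣ f)

lemma mem_monicDivisors {f g : F[X]} (hf : f ≠ 0) :
    g ∈ monicDivisors f ↔ g.Monic ∧ g ∣ f := by
  simp only [monicDivisors, Finset.mem_filter, Finset.mem_biUnion, Finset.mem_range,
    mem_monicsOfDegree]
  refine and_congr_left fun h => ⟨fun ⟨_, _, hg⟩ => hg.1, fun hg => ⟨_, ?_, hg, rfl⟩⟩
  exact Nat.lt_succ_of_le (natDegree_le_of_dvd h hf)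

theorem sum_monicDivisors_polyVonMangoldt {f : F[X]} (hf : f.Monic) :
    ∑ g ∈ monicDivisors f, polyVonMangoldt g = f.natDegree := by
  classical
  have hfac {P : F[X]} (hP : P ∈ primeFactors f) : Irreducible P ∧ P.Monic ∧ P ∣ f :=
    (Polynomial.mem_normalizedFactors_iff hf.ne_zero).1 (mem_primeFactors.1 hP)
  have hpow {P : F[X]} (hP : Irreducible P) (k : ℕ) : P ^ k ∣ f ↔ k ≤ multiplicity P f :=
    (FiniteMultiplicity.of_prime_left hP.prime hf.ne_zero).pow_dvd_iff_le_multiplicity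
  have hsigma : f.natDegree
      = ∑ x ∈ (primeFactors f).sigma fun P => Finset.Icc 1 (multiplicity P f), x.1.natDegree := by
    simp [natDegree_eq_sum_primeFactors hf, Finset.sum_sigma]
  rw [hsigma]
  symm
  refine Finset.sum_of_injOn (fun x => x.1 ^ x.2) ?_ ?_ ?_ ?_
  · rintro ⟨P, k⟩ hx ⟨Q, l⟩ hy (hxy : P ^ k = Q ^ l)
    simp only [Finset.coe_sigma, Set.mem_sigma_iff, Finset.mem_coe, Finset.mem_Icc] at hx hy
    obtain ⟨hP, hPm, -⟩ := hfac hx.1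
    obtain ⟨hQ, hQm, -⟩ := hfac hy.1
    obtain rfl : P = Q := by
      simpa [radical_pow_of_prime, hP.prime, hQ.prime, hPm.normalize_eq_self,
        hQm.normalize_eq_self, (hx.2.1.trans_lt' one_pos).ne', (hy.2.1.trans_lt' one_pos).ne']
        using congrArg radical hxy
    rw [pow_injective_of_not_isUnit hP.not_isUnit hP.ne_zero hxy]
  · rintro ⟨P, k⟩ hx
    simp only [Finset.coe_sigma, Set.mem_sigma_iff, Finset.mem_coe, Finset.mem_Icc] at hx
    obtain ⟨hP, hPm, -⟩ := hfac hx.1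
    exact (mem_monicDivisors hf.ne_zero).2 ⟨hPm.pow k, (hpow hP k).2 hx.2.2⟩
  · intro g hg hnot
    obtain ⟨hgm, hgf⟩ := (mem_monicDivisors hf.ne_zero).1 hg
    refine if_neg fun hpp => hnot ?_
    obtain ⟨P, k, hk, hPm, hP, rfl⟩ := exists_monic_irreducible_pow_eq hgm hpp
    have hmem : P ∈ primeFactors f := mem_primeFactors.2 <|
      (Polynomial.mem_normalizedFactors_iff hf.ne_zero).2 ⟨hP, hPm, (dvd_pow_self P hk).trans hgf⟩
    exact ⟨⟨P, k⟩, by simp [hmem, (hpow hP k).1 hgf, Nat.one_le_iff_ne_zero.2 hk], rfl⟩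
  · rintro ⟨P, k⟩ hx
    simp only [Finset.mem_sigma, Finset.mem_Icc] at hx
    exact (polyVonMangoldt_pow (hfac hx.1).1 (by lia)).symm

lemma sum_monicsOfDegree_sum_monicDivisors {M : Type*} [AddCommMonoid M] (m : ℕ)
    (φ : F[X] → F[X] → M) :
    ∑ f ∈ monicsOfDegree F m, ∑ g ∈ monicDivisors f, φ g f
      = ∑ ij ∈ Finset.HasAntidiagonal.antidiagonal m, ∑ g ∈ monicsOfDegree F ij.1,
          ∑ h ∈ monicsOfDegree F ij.2, φ g (g * h) := by
  simp_rw [Finset.sum_sigma']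
  symm
  refine Finset.sum_nbij (fun x => ⟨x.2.1 * x.2.2, x.2.1⟩) ?_ ?_ ?_ fun _ _ => rfl
  · rintro ⟨⟨i, j⟩, g, h⟩ hx
    simp only [Finset.mem_sigma, Finset.HasAntidiagonal.mem_antidiagonal,
      mem_monicsOfDegree] at hx ⊢
    obtain ⟨hij, ⟨hg, rfl⟩, hh, rfl⟩ := hx
    exact ⟨⟨hg.mul hh, by rw [hg.natDegree_mul hh, hij]⟩,
      (mem_monicDivisors (hg.mul hh).ne_zero).2 ⟨hg, dvd_mul_right g h⟩⟩
  · rintro ⟨⟨i, j⟩, g, h⟩ hx ⟨⟨i', j'⟩, g', h'⟩ hx' heq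
    simp only [Finset.coe_sigma, Set.mem_sigma_iff, Finset.mem_coe, mem_monicsOfDegree] at hx hx'
    obtain ⟨-, ⟨hg, rfl⟩, -, rfl⟩ := hx
    obtain ⟨-, ⟨-, rfl⟩, -, rfl⟩ := hx'
    obtain ⟨hmul, rfl⟩ : g * h = g' * h' ∧ g = g' := by simpa using heq
    rw [mul_left_cancel₀ hg.ne_zero hmul]
  · rintro ⟨f, g⟩ hx
    simp only [Finset.coe_sigma, Set.mem_sigma_iff, Finset.mem_coe, mem_monicsOfDegree] at hx
    obtain ⟨⟨hf, rfl⟩, hgf⟩ := hx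
    obtain ⟨hg, h, rfl⟩ := (mem_monicDivisors hf.ne_zero).1 hgf
    have hh : h.Monic := hg.of_mul_monic_left hf
    exact ⟨⟨(g.natDegree, h.natDegree), g, h⟩,
      by simp [mem_monicsOfDegree, hg, hh, hg.natDegree_mul hh], rfl⟩

variable {R : Type*} [CommRing R]

/-- The L-series `∑ χ(f) T ^ deg f`, over monic `f`, of a multiplicative function on `F[X]`. -/
noncomputable def lSeries (χ : F[X] →* R) : PowerSeries R :=
  PowerSeries.mk fun m => ∑ f ∈ monicsOfDegree F m, χ f

theorem X_mul_derivative_lSeries (χ : F[X] →* R) :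
    PowerSeries.X * PowerSeries.derivative R (lSeries χ)
      = PowerSeries.mk (fun m => ∑ f ∈ monicsOfDegree F m, polyVonMangoldt f * χ f)
        * lSeries χ := by
  ext m
  have hderiv : PowerSeries.coeff m (PowerSeries.X * PowerSeries.derivative R (lSeries χ))
      = ∑ f ∈ monicsOfDegree F m, (f.natDegree : R) * χ f := by
    have hdeg {f : F[X]} (hf : f ∈ monicsOfDegree F m) : (f.natDegree : R) * χ f = χ f * m := by
      rw [(mem_monicsOfDegree.1 hf).2, mul_comm]
    rw [Finset.sum_congr rfl fun f hf => hdeg hf, ← Finset.sum_mul]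
    cases m <;> simp [lSeries, PowerSeries.coeff_derivative, PowerSeries.coeff_succ_X_mul]
  calc _ = ∑ f ∈ monicsOfDegree F m, ∑ g ∈ monicDivisors f, (polyVonMangoldt g : R) * χ f := by
        rw [hderiv]
        refine Finset.sum_congr rfl fun f hf => ?_
        rw [← Finset.sum_mul, ← sum_monicDivisors_polyVonMangoldt (mem_monicsOfDegree.1 hf).1,
          Nat.cast_sum]
    _ = _ := by
        simp only [sum_monicsOfDegree_sum_monicDivisors m fun g f => (polyVonMangoldt g : R) * χ f,
          PowerSeries.coeff_mul, lSeries, PowerSeries.coeff_mk, Finset.sum_mul_sum, map_mul,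
          mul_assoc]

end VonMangoldt

section FieldCharpoly

open IntermediateField

/-- The characteristic polynomial of multiplication by `a` on the finite extension `K` of `F`,
written as a power of the minimal polynomial of `a`. -/
noncomputable def fieldCharpoly (F : Type*) {K : Type*} [Field F] [Field K] [Algebra F K] (a : K) :
    F[X] :=
  minpoly F a ^ Module.finrank F⟮a⟯ K

variable (F : Type*) {K : Type*} [Field F] [Field K] [Algebra F K] [FiniteDimensional F K]

lemma monic_fieldCharpoly (a : K) : (fieldCharpoly F a).Monic :=
  (minpoly.monic (Algebra.IsIntegral.isIntegral a)).pow _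

lemma natDegree_minpoly_mul_finrank_adjoin (a : K) :
    (minpoly F a).natDegree * Module.finrank F⟮a⟯ K = Module.finrank F K := by
  rw [← adjoin.finrank (Algebra.IsIntegral.isIntegral a), Module.finrank_mul_finrank]

lemma natDegree_fieldCharpoly (a : K) :
    (fieldCharpoly F a).natDegree = Module.finrank F K := by
  rw [fieldCharpoly, natDegree_pow, mul_comm, natDegree_minpoly_mul_finrank_adjoin]

lemma isPrimePow_fieldCharpoly (a : K) : IsPrimePow (fieldCharpoly F a) :=
  (minpoly.prime (Algebra.IsIntegral.isIntegral a)).isPrimePow.pow Module.finrank_pos.ne'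

variable {F} in
lemma fieldCharpoly_eq_pow_iff {P : F[X]} (hP : Irreducible P) (hPm : P.Monic) {k : ℕ}
    (hk : P.natDegree * k = Module.finrank F K) (a : K) :
    fieldCharpoly F a = P ^ k ↔ minpoly F a = P := by
  have hint : IsIntegral F a := Algebra.IsIntegral.isIntegral a
  constructor <;> intro h
  · have hdvd : minpoly F a ∣ P ^ k := h ▸ dvd_pow_self (minpoly F a) Module.finrank_pos.ne'
    exact eq_of_monic_of_associated (minpoly.monic hint) hPm
      ((minpoly.irreducible hint).associated_of_dvd hP ((minpoly.prime hint).dvd_of_dvd_pow hdvd))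
  · subst h
    rw [← natDegree_minpoly_mul_finrank_adjoin F a] at hk
    rw [fieldCharpoly, Nat.eq_of_mul_eq_mul_left (minpoly.natDegree_pos hint) hk]

theorem map_fieldCharpoly [IsGalois F K] (a : K) :
    (fieldCharpoly F a).map (algebraMap F K) = ∏ σ : Gal(K/F), (X - C (σ a)) := by
  have hint : IsIntegral F a := Algebra.IsIntegral.isIntegral a
  obtain ⟨G, hGmap, hGdeg, hG⟩ := lifts_and_natDegree_eq_and_monic
    (Algebra.IsInvariant.charpoly_mem_lifts F K Gal(K/F) a)
    (MulSemiringAction.monic_charpoly Gal(K/F) a)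
  rw [MulSemiringAction.charpoly_eq] at hGmap hGdeg
  have hdvd : G ∣ minpoly F a ^ Fintype.card Gal(K/F) := by
    rw [← map_dvd_map' (algebraMap F K), hGmap, Polynomial.map_pow, ← Finset.card_univ,
      ← Finset.prod_const]
    refine Finset.prod_dvd_prod_of_dvd _ _ fun σ _ => ?_
    rw [dvd_iff_isRoot, IsRoot, eval_map_algebraMap, AlgEquiv.smul_def, ← minpoly.algEquiv_eq σ a,
      minpoly.aeval]
  obtain ⟨k, -, hk⟩ := (dvd_prime_pow (minpoly.prime hint) _).1 hdvd
  have hGpow : G = minpoly F a ^ k := eq_of_monic_of_associated hG ((minpoly.monic hint).pow k) hk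
  have hdeg : (minpoly F a).natDegree * k = Module.finrank F K := by
    rw [mul_comm, ← natDegree_pow, ← hGpow, hGdeg, natDegree_prod_of_monic _ _ fun _ _ =>
      monic_X_sub_C _, ← IsGalois.card_aut_eq_finrank]
    simp
  rw [(fieldCharpoly_eq_pow_iff (minpoly.irreducible hint) (minpoly.monic hint) hdeg a).2 rfl,
    ← hGpow, hGmap]
  rfl

end FieldCharpoly

lemma coeff_prod_one_sub_C_mul_X {R ι : Type*} [CommRing R] (s : Finset ι) (b : ι → R) (k : ℕ) :
    (∏ i ∈ s, (1 - C (b i) * X)).coeff k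
      = (-1) ^ k * ∑ t ∈ s.powersetCard k, ∏ i ∈ t, b i := by
  classical
  have hterm (t : Finset ι) : (∏ i ∈ t, -(C (b i) * X)).coeff k
      = if t.card = k then (-1) ^ k * ∏ i ∈ t, b i else 0 := by
    have hmon : ∏ i ∈ t, -(C (b i) * X) = C ((-1) ^ t.card * ∏ i ∈ t, b i) * X ^ t.card := by
      simp [Finset.prod_neg, Finset.prod_mul_distrib, mul_assoc]
    rw [hmon, coeff_C_mul_X_pow]
    grind
  simp only [sub_eq_add_neg, Finset.prod_one_add, finsetSum_coeff, hterm, Finset.mul_sum,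
    Finset.powersetCard_eq_filter, Finset.sum_filter, mul_ite, mul_zero]

section FiniteField

variable {F K : Type*} [Field F] [Field K] [Algebra F K]

lemma card_filter_minpoly_eq [Finite F] [Fintype K] [DecidableEq F[X]] {P : F[X]}
    (hP : Irreducible P) (hPm : P.Monic) (hd : P.natDegree ∣ Module.finrank F K) :
    Finset.card {a : K | minpoly F a = P} = P.natDegree := by
  classical
  have hdvd : P ∣ X ^ Fintype.card K - X := by
    rw [← Nat.card_eq_fintype_card, Module.natCard_eq_pow_finrank (K := F)]
    exact hP.natDegree_dvd_iff_dvd_X_pow_card_pow_sub_X.1 hd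
  have hsplits : (X ^ Fintype.card K - X : K[X]).Splits := by
    rw [splits_iff_card_roots, FiniteField.roots_X_pow_card_sub_X,
      FiniteField.X_pow_card_sub_X_natDegree_eq _ Fintype.one_lt_card, Finset.card_val,
      Finset.card_univ]
  have hPsplits : (P.map (algebraMap F K)).Splits :=
    hsplits.of_dvd (FiniteField.X_pow_card_sub_X_ne_zero K Fintype.one_lt_card)
      (by simpa using Polynomial.map_dvd (algebraMap F K) hdvd)
  rw [← card_rootSet_eq_natDegree (PerfectField.separable_of_irreducible hP) hPsplits,
    ← Set.toFinset_card]
  congr 1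
  ext a
  simp only [Finset.mem_filter, Finset.mem_univ, true_and, Set.mem_toFinset, mem_rootSet]
  constructor
  · rintro rfl
    exact ⟨hP.ne_zero, minpoly.aeval F a⟩
  · exact fun h => (minpoly.eq_of_irreducible_of_monic hP h.2 hPm).symm

lemma card_filter_fieldCharpoly_eq [Finite F] [Fintype K] [DecidableEq F[X]] {f : F[X]}
    (hf : f.Monic) (hd : f.natDegree = Module.finrank F K) :
    Finset.card {a : K | fieldCharpoly F a = f} = polyVonMangoldt f := by
  by_cases hpp : IsPrimePow f
  · obtain ⟨P, k, hk, hPm, hP, rfl⟩ := exists_monic_irreducible_pow_eq hf hpp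
    rw [natDegree_pow, mul_comm] at hd
    simp only [fieldCharpoly_eq_pow_iff hP hPm hd]
    rw [card_filter_minpoly_eq hP hPm ⟨k, hd.symm⟩, polyVonMangoldt_pow hP hk]
  · rw [polyVonMangoldt, if_neg hpp, Finset.card_filter_eq_zero_iff]
    rintro a - rfl
    exact hpp (isPrimePow_fieldCharpoly F a)

theorem sum_fieldCharpoly [Fintype F] [Fintype K] {R : Type*} [CommRing R] (φ : F[X] → R) :
    ∑ a : K, φ (fieldCharpoly F a)
      = ∑ f ∈ monicsOfDegree F (Module.finrank F K), polyVonMangoldt f * φ f := by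
  classical
  have hmaps : ∀ a ∈ (Finset.univ : Finset K),
      fieldCharpoly F a ∈ monicsOfDegree F (Module.finrank F K) := fun a _ =>
    mem_monicsOfDegree.2 ⟨monic_fieldCharpoly F a, natDegree_fieldCharpoly F a⟩
  rw [← Finset.sum_fiberwise_of_maps_to hmaps]
  refine Finset.sum_congr rfl fun f hf => ?_
  obtain ⟨hfm, hfd⟩ := mem_monicsOfDegree.1 hf
  rw [Finset.sum_congr rfl fun a ha => congrArg φ (Finset.mem_filter.1 ha).2, Finset.sum_const,
    card_filter_fieldCharpoly_eq hfm hfd, nsmul_eq_mul]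

variable [Fintype F] [Finite K]

lemma map_reverse_fieldCharpoly (a : K) :
    (fieldCharpoly F a).reverse.map (algebraMap F K)
      = ∏ i ∈ Finset.range (Module.finrank F K), (1 - C (a ^ Fintype.card F ^ i) * X) := by
  have hmap : (fieldCharpoly F a).map (algebraMap F K)
      = ∏ i ∈ Finset.range (Module.finrank F K), (X - C (a ^ Fintype.card F ^ i)) := by
    rw [map_fieldCharpoly, Finset.prod_range]
    refine (Function.Bijective.prod_comp
      (FiniteField.bijective_frobeniusAlgEquivOfAlgebraic_pow F K) _).symm.trans ?_
    refine Finset.prod_congr rfl fun i _ => ?_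
    rw [AlgEquiv.coe_pow, FiniteField.coe_frobeniusAlgEquivOfAlgebraic_iterate]
  rw [← reverse_prod_X_sub_C, ← hmap, reverse, reverse, reflect_map, natDegree_map]

theorem algebraMap_coeff_reverse_fieldCharpoly (a : K) (k : ℕ) :
    algebraMap F K ((fieldCharpoly F a).reverse.coeff k)
      = (-1) ^ k * traceFn (Fintype.card F) (Module.finrank F K) k a := by
  rw [← coeff_map, map_reverse_fieldCharpoly, coeff_prod_one_sub_C_mul_X, traceFn]

end FiniteField

section LFunction

variable {F K R : Type*} [Field F] [Field K] [Algebra F K] [Fintype F] [Fintype K]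
  [CommRing R] [IsDomain R]

theorem sum_apply_fieldCharpoly {χ : F[X] →* R} {p : R[X]} (hp : p.Monic) (hs : p.Splits)
    (hL : lSeries χ = p.reverse) :
    ∑ a : K, χ (fieldCharpoly F a) = -powerSum (Module.finrank F K) p := by
  have hlog := X_mul_derivative_lSeries χ
  rw [hL] at hlog
  rw [sum_fieldCharpoly χ, ← coeff_logDeriv_reverse hp hs hlog Module.finrank_pos.ne',
    PowerSeries.coeff_mk]

end LFunction

/-- The discrete logarithm modulo `⟨1 + X ^ 3⟩` on `(𝔽₂[X] / X ^ 5)ˣ = ⟨1 + X⟩ × ⟨1 + X ^ 3⟩`, a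
product of cyclic groups of orders `8` and `2`: the exponent of `1 + X` in the unit
`1 + c 0 * X + c 1 * X ^ 2 + c 2 * X ^ 3 + c 3 * X ^ 4`. -/
def unitLog (c : Fin 4 → ZMod 2) : ZMod 8 :=
  (c 0).val + 2 * (c 1).val + 4 * (c 3 + c 0 * c 2 + c 0 * c 1).val

lemma unitLog_mul (a b c d a' b' c' d' : ZMod 2) :
    unitLog ![a + a', b + a * a' + b', c + b * a' + a * b' + c',
        d + c * a' + b * b' + a * c' + d']
      = unitLog ![a, b, c, d] + unitLog ![a', b', c', d'] := by
  revert a b c d a' b' c' d'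
  decide

lemma unitLog_eq_zero_iff {c : Fin 4 → ZMod 2} :
    unitLog c = 0 ↔ c 0 = 0 ∧ c 1 = 0 ∧ c 3 = 0 := by
  have h : ∀ a b d e : ZMod 2, unitLog ![a, b, e, d] = 0 ↔ a = 0 ∧ b = 0 ∧ d = 0 := by decide
  simpa [unitLog] using h (c 0) (c 1) (c 3) (c 2)

lemma topCoeffs_four_eq {R : Type*} [Semiring R] (f : R[X]) :
    topCoeffs 4 f = ![f.reverse.coeff 1, f.reverse.coeff 2, f.reverse.coeff 3,
      f.reverse.coeff 4] := by
  ext i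
  fin_cases i <;> rfl

lemma unitLog_topCoeffs_mul {f g : (ZMod 2)[X]} (hf : f.Monic) (hg : g.Monic) :
    unitLog (topCoeffs 4 (f * g)) = unitLog (topCoeffs 4 f) + unitLog (topCoeffs 4 g) := by
  have hf0 : f.reverse.coeff 0 = 1 := by rw [coeff_zero_reverse, hf.leadingCoeff]
  have hg0 : g.reverse.coeff 0 = 1 := by rw [coeff_zero_reverse, hg.leadingCoeff]
  simp only [topCoeffs_four_eq, ← unitLog_mul, reverse_mul_of_domain, coeff_mul,
    Finset.Nat.sum_antidiagonal_eq_sum_range_succ_mk, Finset.sum_range_succ, Finset.sum_range_zero]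
  simp only [hf0, hg0, tsub_zero, tsub_self, Nat.reduceSub, zero_add, one_mul, mul_one]
  congr 1
  ext i
  fin_cases i <;> simp <;> ring

lemma monic_of_ne_zero {f : (ZMod 2)[X]} (hf : f ≠ 0) : f.Monic :=
  (by decide : ∀ c : ZMod 2, c ≠ 0 → c = 1) _ (leadingCoeff_ne_zero.2 hf)

section Character

variable {R : Type*} [CommRing R]

open Classical in
/-- The completely multiplicative function `f ↦ ψ (log f*)` on `𝔽₂[X]`, where `f*` is the reversed
polynomial modulo `X ^ 5`; it vanishes at `0`. -/
noncomputable def logChar (ψ : AddChar (ZMod 8) R) : (ZMod 2)[X] →* R where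
  toFun f := if f = 0 then 0 else ψ (unitLog (topCoeffs 4 f))
  map_one' := by
    have hlog : unitLog (topCoeffs 4 (1 : (ZMod 2)[X])) = 0 := by
      simpa using unitLog_topCoeffs_mul (monic_one (R := ZMod 2)) monic_one
    rw [if_neg one_ne_zero, hlog, ψ.map_zero_eq_one]
  map_mul' f g := by
    by_cases hf : f = 0
    · simp [hf]
    by_cases hg : g = 0
    · simp [hg]
    rw [if_neg hf, if_neg hg, if_neg (mul_ne_zero hf hg), ← ψ.map_add_eq_mul,
      unitLog_topCoeffs_mul (monic_of_ne_zero hf) (monic_of_ne_zero hg)]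

lemma logChar_monic (ψ : AddChar (ZMod 8) R) {f : (ZMod 2)[X]} (hf : f.Monic) :
    logChar ψ f = ψ (unitLog (topCoeffs 4 f)) :=
  if_neg hf.ne_zero

/-- The polynomial whose reverse is the L-series of `logChar ψ`, for `ψ ≠ 1` and `w = ψ 1`. -/
noncomputable def lPoly (w : R) : R[X] :=
  Cubic.toPoly ⟨1, 1 + w, 1 + w + w ^ 2 + w ^ 7, 2 + w + 2 * w ^ 2 + w ^ 3 + w ^ 5 + w ^ 7⟩

lemma natDegree_lPoly [Nontrivial R] (w : R) : (lPoly w).natDegree = 3 :=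
  Cubic.natDegree_of_a_ne_zero one_ne_zero

lemma monic_lPoly [Nontrivial R] (w : R) : (lPoly w).Monic :=
  Cubic.monic_of_a_eq_one rfl

lemma addChar_eq_pow {m : ℕ} [NeZero m] (ψ : AddChar (ZMod m) R) (a : ZMod m) :
    ψ a = ψ 1 ^ a.val := by
  rw [← ψ.map_nsmul_eq_pow, nsmul_one, ZMod.natCast_zmod_val]

/-- The logarithms of the monic polynomials of degree `m`, with multiplicity, represented in
`{0, …, 7}`. -/
def monicLogs (m : ℕ) : Multiset ℕ :=
  Finset.univ.val.map fun c : Fin m → ZMod 2 =>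
    (unitLog fun i => if h : (i : ℕ) < m then c ⟨i, h⟩ else 0).val

lemma sum_monicsOfDegree_logChar (ψ : AddChar (ZMod 8) R) (m : ℕ) :
    ∑ f ∈ monicsOfDegree (ZMod 2) m, logChar ψ f
      = ((monicLogs m).map (ψ 1 ^ ·)).sum := by
  rw [sum_monicsOfDegree, monicLogs, Multiset.map_map, Finset.sum]
  congr 1
  refine Multiset.map_congr rfl fun c _ => ?_
  rw [logChar_monic ψ ((monicEquivCoeffs (ZMod 2) m).symm c).2.1, topCoeffs_monicEquivCoeffs_symm,
    addChar_eq_pow]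
  rfl

lemma sum_monicsOfDegree_logChar_eq_zero [IsDomain R] {ψ : AddChar (ZMod 8) R} (hψ : ψ ≠ 1)
    (j : ℕ) : ∑ f ∈ monicsOfDegree (ZMod 2) (4 + j), logChar ψ f = 0 := by
  have hlogs : (Finset.univ : Finset (Fin 4 → ZMod 2)).val.map unitLog
      = 2 • (Finset.univ : Finset (ZMod 8)).val := by
    decide
  have hsum : ∑ c, ψ (unitLog c) = 0 := by
    rw [Finset.sum, ← Function.comp_def, ← Multiset.map_map, hlogs, Multiset.map_nsmul,
      Multiset.sum_nsmul]
    exact (congrArg (2 • ·) (AddChar.sum_eq_zero_of_ne_one hψ)).trans (smul_zero 2)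
  rw [Finset.sum_congr rfl fun f hf => logChar_monic ψ (mem_monicsOfDegree.1 hf).1,
    sum_monicsOfDegree_topCoeffs 4 j fun c => ψ (unitLog c), hsum, smul_zero]

theorem lSeries_logChar [IsDomain R] {ψ : AddChar (ZMod 8) R} (hψ : ψ ≠ 1) :
    lSeries (logChar ψ) = (lPoly (ψ 1)).reverse := by
  ext m
  rw [lSeries, PowerSeries.coeff_mk, Polynomial.coeff_coe, coeff_reverse, natDegree_lPoly]
  obtain hm | ⟨j, rfl⟩ := (lt_or_ge m 4).imp_right Nat.exists_eq_add_of_le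
  · rw [revAt_le (by lia), sum_monicsOfDegree_logChar]
    interval_cases m
    · have hlogs : monicLogs 0 = {0} := by decide
      simp [hlogs, lPoly]
    · have hlogs : monicLogs 1 = {0, 1} := by decide
      simp [hlogs, lPoly]
    · have hlogs : monicLogs 2 = {0, 1, 2, 7} := by decide
      simp [hlogs, lPoly]
      ring
    · have hlogs : monicLogs 3 = {0, 1, 0, 5, 2, 2, 7, 3} := by decide
      simp [hlogs, lPoly]
      ring
  · rw [sum_monicsOfDegree_logChar_eq_zero hψ, revAt_eq_self_of_lt (by lia)]
    exact (Cubic.coeff_eq_zero (by lia)).symm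

end Character

section Factorization

variable {R : Type*} [CommRing R]

lemma lPoly_of_pow_four {w : R} (hw : w ^ 4 = -1) :
    lPoly w = (X + C (w + w ^ 3)) * (X ^ 2 + X - C (w ^ 3) * (X + 2)) := by
  have hC : C w ^ 4 = -1 := by rw [← C_pow, hw, C_neg, C_1]
  simp only [lPoly, Cubic.toPoly, C_add, C_mul, C_pow, C_1, C_ofNat]
  linear_combination (C w ^ 3 * X + X * (1 + C w ^ 2) + 2 * C w ^ 2 + 2 + C w + C w ^ 3) * hC

lemma lPoly_of_sq {w : R} (hw : w ^ 2 = -1) : lPoly w = X ^ 2 * (X + C (1 + w)) := by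
  have hC : C w ^ 2 = -1 := by rw [← C_pow, hw, C_neg, C_1]
  simp only [lPoly, Cubic.toPoly, C_add, C_mul, C_pow, C_1, C_ofNat]
  linear_combination
    (X + 2 + C w * (1 + C w ^ 4) + X * C w * (C w ^ 4 - C w ^ 2 + 1)) * hC

lemma lPoly_neg_one : lPoly (-1 : R) = X ^ 3 := by
  simp only [lPoly, Cubic.toPoly, C_add, C_mul, C_pow, C_1, C_ofNat, C_neg]
  ring

lemma d21_map_eq {i : R} (hi : i ^ 2 = -1) :
    d21.map (Int.castRingHom R) = (X + C (1 + i)) * (X + C (1 + -i)) := by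
  have hC : C i ^ 2 = -1 := by rw [← C_pow, hi, C_neg, C_1]
  simp only [d21, Polynomial.map_add, Polynomial.map_mul, Polynomial.map_pow, map_X,
    Polynomial.map_ofNat, C_add, C_neg, C_1]
  linear_combination hC

lemma d22_map_eq {r : R} (hr : r ^ 2 = -2) :
    d22.map (Int.castRingHom R) = (X + C r) * (X + C (-r)) := by
  have hC : C r ^ 2 = -2 := by rw [← C_pow, hr, C_neg, C_ofNat]
  simp only [d22, Polynomial.map_add, Polynomial.map_pow, map_X, Polynomial.map_ofNat, C_neg]
  linear_combination hC

lemma d81_map_eq {t : R} (ht : t ^ 4 = -1) :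
    d81.map (Int.castRingHom R)
      = (X ^ 2 + X - C t * (X + 2)) * (X ^ 2 + X - C (t ^ 3) * (X + 2))
        * (X ^ 2 + X - C (-t) * (X + 2)) * (X ^ 2 + X - C (-t ^ 3) * (X + 2)) := by
  have hC : C t ^ 4 = -1 := by rw [← C_pow, ht, C_neg, C_1]
  have hd81 : d81.map (Int.castRingHom R) = (X ^ 2 + X) ^ 4 + (X + 2) ^ 4 := by
    simp only [d81, Polynomial.map_add, Polynomial.map_mul, Polynomial.map_pow, map_X,
      Polynomial.map_ofNat]
    ring
  rw [hd81]
  simp only [C_neg, C_pow]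
  linear_combination
    (C t ^ 2 * (X ^ 2 + X) ^ 2 * (X + 2) ^ 2 + (1 - C t ^ 4) * (X + 2) ^ 4) * hC

theorem prod_lPoly {t : R} (ht : t ^ 4 = -1) :
    ∏ j ∈ Finset.univ.erase (0 : ZMod 8), lPoly (t ^ j.val)
      = X ^ 7 * d21.map (Int.castRingHom R) * d22.map (Int.castRingHom R) ^ 2
        * d81.map (Int.castRingHom R) := by
  have herase : ∏ j ∈ Finset.univ.erase (0 : ZMod 8), lPoly (t ^ j.val)
      = ∏ k ∈ Finset.range 7, lPoly (t ^ (k + 1)) := rfl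
  have h5 : t ^ 5 = -t := by linear_combination t * ht
  have h6 : t ^ 6 = -t ^ 2 := by linear_combination t ^ 2 * ht
  have h7 : t ^ 7 = -t ^ 3 := by linear_combination t ^ 3 * ht
  have h9 : (t ^ 3) ^ 3 = t := by linear_combination (t ^ 5 - t) * ht
  have hL1 := lPoly_of_pow_four ht
  have hL3 := lPoly_of_pow_four (w := t ^ 3) (by linear_combination (t ^ 8 - t ^ 4 + 1) * ht)
  have hL5 := lPoly_of_pow_four (w := -t) (by linear_combination ht)
  have hL7 := lPoly_of_pow_four (w := -t ^ 3) (by linear_combination (t ^ 8 - t ^ 4 + 1) * ht)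
  have hL2 := lPoly_of_sq (w := t ^ 2) (by linear_combination ht)
  have hL6 := lPoly_of_sq (w := -t ^ 2) (by linear_combination ht)
  rw [herase, d21_map_eq (i := t ^ 2) (by linear_combination ht),
    d22_map_eq (r := t + t ^ 3) (by linear_combination (t ^ 2 + 2) * ht), d81_map_eq ht]
  simp only [Finset.prod_range_succ, Finset.prod_range_zero, Nat.reduceAdd, pow_one, ht, h5, h6, h7,
    hL1, hL2, hL3, lPoly_neg_one, hL5, hL6, hL7, Odd.neg_pow (by decide : Odd 3), h9, neg_add_rev]
  generalize X ^ 2 + X - C t * (X + 2) = q₁, X ^ 2 + X - C (t ^ 3) * (X + 2) = q₃,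
    X ^ 2 + X - C (-t) * (X + 2) = q₅, X ^ 2 + X - C (-t ^ 3) * (X + 2) = q₇
  simp only [C_add, C_neg, C_pow]
  ring

end Factorization

lemma sum_powerSum_lPoly {t : ℂ} (ht : t ^ 4 = -1) {n : ℕ} (hn : n ≠ 0) :
    ∑ j ∈ Finset.univ.erase (0 : ZMod 8), powerSum n (lPoly (t ^ j.val))
      = rho n d21 + 2 * rho n d22 + rho n d81 := by
  have hprod := prod_lPoly ht
  have hne : X ^ 7 * d21.map (Int.castRingHom ℂ) * d22.map (Int.castRingHom ℂ) ^ 2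
      * d81.map (Int.castRingHom ℂ) ≠ 0 :=
    hprod ▸ Finset.prod_ne_zero_iff.2 fun _ _ => (monic_lPoly _).ne_zero
  rw [← powerSum_prod _ fun _ _ => (monic_lPoly _).ne_zero, hprod,
    powerSum_mul (left_ne_zero_of_mul hne) (right_ne_zero_of_mul hne)]
  replace hne := left_ne_zero_of_mul hne
  rw [powerSum_mul (left_ne_zero_of_mul hne) (right_ne_zero_of_mul hne)]
  replace hne := left_ne_zero_of_mul hne
  rw [powerSum_mul (left_ne_zero_of_mul hne) (right_ne_zero_of_mul hne), powerSum_pow,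
    powerSum_pow, powerSum_X hn, mul_zero, zero_add]
  rfl

section Counting

lemma card_mul_card_filter_eq_zero {ι A R : Type*} [Fintype ι] [CommRing A] [Fintype A]
    [DecidableEq A] [CommRing R] [IsDomain R] {ψ : AddChar A R} (hψ : ψ.IsPrimitive) (g : ι → A) :
    (Fintype.card A : R) * Finset.card {i | g i = 0} = ∑ j, ∑ i, ψ (j * g i) := by
  simp_rw [Finset.sum_comm (γ := A), AddChar.sum_mulShift _ hψ, Nat.cast_ite, Nat.cast_zero]
  rw [← Finset.sum_filter, Finset.sum_const, nsmul_eq_mul, mul_comm]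

variable {K : Type*} [Field K]

lemma traceFn_eq_zero_iff [Finite K] {F : Type*} [Field F] [Fintype F] [Algebra F K] {k : ℕ}
    {a : K} :
    traceFn (Fintype.card F) (Module.finrank F K) k a = 0
      ↔ (fieldCharpoly F a).reverse.coeff k = 0 := by
  rw [← map_eq_zero (algebraMap F K), algebraMap_coeff_reverse_fieldCharpoly]
  simp

variable [Algebra (ZMod 2) K]

lemma unitLog_fieldCharpoly_eq_zero_iff [Finite K] {a : K} :
    unitLog (topCoeffs 4 (fieldCharpoly (ZMod 2) a)) = 0
      ↔ traceFn 2 (Module.finrank (ZMod 2) K) 1 a = 0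
        ∧ traceFn 2 (Module.finrank (ZMod 2) K) 2 a = 0
        ∧ traceFn 2 (Module.finrank (ZMod 2) K) 4 a = 0 := by
  have h k := traceFn_eq_zero_iff (F := ZMod 2) (k := k) (a := a)
  rw [ZMod.card] at h
  rw [unitLog_eq_zero_iff, h, h, h]
  rfl

theorem eight_mul_card_unitLog_eq_zero [Fintype K] {R : Type*} [Field R] [IsAlgClosed R]
    {ψ : AddChar (ZMod 8) R} (hψ : ψ.IsPrimitive) :
    8 * (Nat.card {a : K // unitLog (topCoeffs 4 (fieldCharpoly (ZMod 2) a)) = 0} : R)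
      = Fintype.card K - ∑ j ∈ Finset.univ.erase (0 : ZMod 8),
          powerSum (Module.finrank (ZMod 2) K) (lPoly (ψ j)) := by
  have hsum : ∀ j ∈ Finset.univ.erase (0 : ZMod 8),
      ∑ a : K, ψ (j * unitLog (topCoeffs 4 (fieldCharpoly (ZMod 2) a)))
        = -powerSum (Module.finrank (ZMod 2) K) (lPoly (ψ j)) := fun j hj => by
    have h := sum_apply_fieldCharpoly (K := K) (monic_lPoly _) (IsAlgClosed.splits _)
      (lSeries_logChar (hψ (Finset.ne_of_mem_erase hj)))
    simpa only [logChar_monic _ (monic_fieldCharpoly _ _), AddChar.mulShift_apply, mul_one] using h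
  have horth := card_mul_card_filter_eq_zero hψ fun a : K =>
    unitLog (topCoeffs 4 (fieldCharpoly (ZMod 2) a))
  rw [← Finset.add_sum_erase _ _ (Finset.mem_univ 0), Finset.sum_congr rfl hsum,
    Finset.sum_neg_distrib, ← sub_eq_add_neg] at horth
  simpa [ZMod.card, Fintype.card_subtype] using horth

end Counting

theorem statement14_general (n : ℕ) (K : Type*) [Field K] [Fintype K]
    (hK : Fintype.card K = 2 ^ n) :
    (Nat.card {a : K // traceFn 2 n 1 a = 0 ∧ traceFn 2 n 2 a = 0 ∧ traceFn 2 n 4 a = 0} : ℂ)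
      = 2 ^ n / 8 - (1 / 8) * (rho n d21 + 2 * rho n d22 + rho n d81) := by
  have : CharP K 2 := charP_of_card_eq_prime_pow hK
  let _ : Algebra (ZMod 2) K := ZMod.algebra K 2
  obtain rfl : n = Module.finrank (ZMod 2) K := Nat.pow_right_injective le_rfl <| by
    simpa [hK] using Module.card_eq_pow_finrank (K := ZMod 2) (V := K)
  have ht : IsPrimitiveRoot (Complex.exp (2 * Real.pi * Complex.I / 8)) 8 := by
    exact_mod_cast Complex.isPrimitiveRoot_exp 8 (by decide)
  have ht4 := (ht.pow (by decide) (by decide : 8 = 4 * 2)).eq_neg_one_of_two_right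
  have hcount := eight_mul_card_unitLog_eq_zero (K := K)
    (AddChar.zmodChar_primitive_of_primitive_root 8 ht)
  simp only [AddChar.zmodChar_apply, sum_powerSum_lPoly ht4 Module.finrank_pos.ne',
    unitLog_fieldCharpoly_eq_zero_iff, hK, Nat.cast_pow, Nat.cast_ofNat] at hcount
  linear_combination hcount / 8

theorem statement14 (n : ℕ) (hn : 4 ≤ n)
    (K : Type) [Field K] [Fintype K] (hK : Fintype.card K = 2 ^ n) :
    (Nat.card {a : K // traceFn 2 n 1 a = 0 ∧ traceFn 2 n 2 a = 0 ∧ traceFn 2 n 4 a = 0} : ℂ)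
      = 2 ^ (n - 3) - (1 / 8) * (rho n d21 + 2 * rho n d22 + rho n d81) := by
  rw [statement14_general n K hK, pow_sub₀ _ two_ne_zero (by lia : 3 ≤ n)]
  norm_num [div_eq_mul_inv]
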